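/- Let K be any field, R = K[x,y,z], and I = (x^k, y^k, z^k, x^α y^α z^α) with α odd, k odd, and k ≥ 2α + 1. Then R/I is a level Artinian algebra and it fails to have the WLP. -/

import Mathlib

open MvPolynomial

noncomputable def component (r : ℕ) (K : Type*) [Field K]
    (I : Ideal (MvPolynomial (Fin r) K)) (d : ℕ) :
    Submodule K (MvPolynomial (Fin r) K ⧸ I) :=
  (MvPolynomial.homogeneousSubmodule (Fin r) K d).map
    (Ideal.Quotient.mkₐ K I).toLinearMap

noncomputable def hilb (r : ℕ) (K : Type*) [Field K]
    (I : Ideal (MvPolynomial (Fin r) K)) (d : ℕ) : ℕ :=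
  Module.finrank K (component r K I d)

/-- Injectivity of the multiplication map `×L : (R/I)_d → (R/I)_{d+1}`. -/
def mulMapInj (r : ℕ) (K : Type*) [Field K]
    (I : Ideal (MvPolynomial (Fin r) K)) (L : MvPolynomial (Fin r) K) (d : ℕ) : Prop :=
  ∀ a ∈ component r K I d, Ideal.Quotient.mk I L * a = 0 → a = 0

/-- Surjectivity of the multiplication map `×L : (R/I)_d → (R/I)_{d+1}`. -/
def mulMapSurj (r : ℕ) (K : Type*) [Field K]
    (I : Ideal (MvPolynomial (Fin r) K)) (L : MvPolynomial (Fin r) K) (d : ℕ) : Prop :=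
  ∀ b ∈ component r K I (d + 1), ∃ a ∈ component r K I d, Ideal.Quotient.mk I L * a = b

/-- `L` is a Lefschetz element: a linear form for which every multiplication map
`×L : (R/I)_d → (R/I)_{d+1}` has maximal rank (is injective or surjective). -/
def isLefschetzElem (r : ℕ) (K : Type*) [Field K]
    (I : Ideal (MvPolynomial (Fin r) K)) (L : MvPolynomial (Fin r) K) : Prop :=
  L ∈ MvPolynomial.homogeneousSubmodule (Fin r) K 1 ∧
    ∀ d : ℕ, mulMapInj r K I L d ∨ mulMapSurj r K I L d

/-- The Weak Lefschetz Property. -/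
def hasWLP (r : ℕ) (K : Type*) [Field K] (I : Ideal (MvPolynomial (Fin r) K)) : Prop :=
  ∃ L, isLefschetzElem r K I L

/-- The socle of `R/I`: the annihilator of the maximal graded ideal. -/
def socle (r : ℕ) (K : Type*) [Field K] (I : Ideal (MvPolynomial (Fin r) K)) :
    Submodule K (MvPolynomial (Fin r) K ⧸ I) where
  carrier := {a | ∀ i : Fin r, Ideal.Quotient.mk I (X i) * a = 0}
  add_mem' := by
    intro a b ha hb i
    rw [mul_add, ha i, hb i, add_zero]
  zero_mem' := by
    intro i
    rw [mul_zero]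
  smul_mem' := by
    intro c a ha i
    rw [mul_smul_comm, ha i, smul_zero]

/-!
Multiplication by `L = ∑ cᵢ xᵢ` from degree `d` to degree `d + 1` is given, in the monomial bases,
by the specialisation at `c` of a matrix over `ℤ[x₁, …, xᵣ]`; it suffices that the determinant of
this generic matrix vanishes, which settles all characteristics at once. Multiplying the column of
`x ^ s` by `x ^ s` and dividing the row of `x ^ t` by `x ^ t` turns the generic matrix into the
divisibility matrix of the monomials, and exchanging two variables permutes the rows and the columns
of the latter. When these two permutations have different signs, the determinant is its own
negative. A permutation of order two has its sign determined by the number of its fixed points.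

In the case at hand `d = α + k - 2`. Comparing the two degrees by multiplication with `z` shows
that they have the same dimension, and that the monomials with equal exponents of `x` and `y` are
two more in degree `d` than in degree `d + 1`, so that the signs differ.
-/

section MonomialIdeal

variable {σ : Type*} {R : Type*} [CommSemiring R]

/-- The monomial ideal whose standard monomials, that is the monomials outside it, are the `X ^ m`
with `m ∈ E`. -/
noncomputable def monomialIdeal (R : Type*) [CommSemiring R] (E : LowerSet (σ →₀ ℕ)) :
    Ideal (MvPolynomial σ R) :=
  restrictSupportIdeal R (E : Set (σ →₀ ℕ))ᶜ E.lower.compl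

theorem mem_monomialIdeal {E : LowerSet (σ →₀ ℕ)} {f : MvPolynomial σ R} :
    f ∈ monomialIdeal R E ↔ ∀ m ∈ E, coeff m f = 0 := by
  change (f.support : Set (σ →₀ ℕ)) ⊆ (E : Set (σ →₀ ℕ))ᶜ ↔ _
  rw [Set.subset_compl_comm]
  simp only [Set.subset_def, SetLike.mem_coe, Set.mem_compl_iff, notMem_support_iff]

theorem span_monomial_image_eq_monomialIdeal (S : Set (σ →₀ ℕ)) :
    Ideal.span ((fun s => monomial s (1 : R)) '' S) = monomialIdeal R (upperClosure S).compl := by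
  ext f
  rw [mem_ideal_span_monomial_image, mem_monomialIdeal]
  refine forall_congr' fun m => ?_
  rw [mem_support_iff, UpperSet.mem_compl_iff, mem_upperClosure, not_imp_comm]

theorem coeff_sum_monomial {ι : Type*} [Fintype ι] {u : ι → σ →₀ ℕ} (hu : Function.Injective u)
    (v : ι → R) (j : ι) : coeff (u j) (∑ i, monomial (u i) (v i)) = v j := by
  classical
  simp only [coeff_sum, coeff_monomial, hu.eq_iff, Finset.sum_ite_eq', Finset.mem_univ, if_true]

end MonomialIdeal

theorem finite_quotient_monomialIdeal {σ R : Type*} [CommRing R] {E : LowerSet (σ →₀ ℕ)}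
    (hE : (E : Set (σ →₀ ℕ)).Finite) :
    Module.Finite R (MvPolynomial σ R ⧸ monomialIdeal R E) := by
  have := hE.fintype
  refine Module.Finite.of_surjective ((Ideal.Quotient.mkₐ R (monomialIdeal R E)).toLinearMap ∘ₗ
    Fintype.linearCombination R fun m : E => monomial (m : σ →₀ ℕ) (1 : R)) fun a => ?_
  obtain ⟨f, rfl⟩ := Ideal.Quotient.mk_surjective a
  refine ⟨fun m => coeff (m : σ →₀ ℕ) f, Ideal.Quotient.eq.2 (mem_monomialIdeal.2 fun m hm => ?_)⟩
  simp only [Fintype.linearCombination_apply, smul_monomial, smul_eq_mul, mul_one, coeff_sub]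
  rw [coeff_sum_monomial Subtype.val_injective _ ⟨m, hm⟩, sub_self]

section Socle

variable {r : ℕ} {K : Type*} [Field K] {E : LowerSet (Fin r →₀ ℕ)}

theorem mk_mem_socle_monomialIdeal {f : MvPolynomial (Fin r) K} :
    Ideal.Quotient.mk _ f ∈ socle r K (monomialIdeal K E) ↔
      ∀ m i, m + Finsupp.single i 1 ∈ E → coeff m f = 0 := by
  change (∀ i, Ideal.Quotient.mk _ (X i) * Ideal.Quotient.mk _ f = 0) ↔ _
  simp only [← map_mul, Ideal.Quotient.eq_zero_iff_mem, mem_monomialIdeal]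
  constructor
  · intro h m i hm
    rw [← coeff_X_mul m i f, add_comm]
    exact h i _ hm
  · intro h i m hm
    rw [coeff_X_mul']
    split_ifs with hi
    · refine h _ i ?_
      rwa [tsub_add_cancel_of_le]
      simpa [Nat.one_le_iff_ne_zero] using hi
    · rfl

theorem socle_monomialIdeal_ne_bot (hE : (E : Set (Fin r →₀ ℕ)).Finite)
    (hne : (E : Set (Fin r →₀ ℕ)).Nonempty) : socle r K (monomialIdeal K E) ≠ ⊥ := by
  classical
  obtain ⟨m, hm⟩ := hE.exists_maximal hne
  refine (Submodule.ne_bot_iff _).2 ⟨Ideal.Quotient.mk _ (monomial m 1), ?_, fun h => ?_⟩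
  · rw [mk_mem_socle_monomialIdeal]
    intro n i hn
    rw [coeff_monomial, if_neg]
    rintro rfl
    simpa using hm.le_of_ge hn le_self_add i
  · rw [Ideal.Quotient.eq_zero_iff_mem, mem_monomialIdeal] at h
    simpa using h m hm.prop

theorem socle_monomialIdeal_le_component {e : ℕ}
    (hE : ∀ m ∈ E, (∀ i, m + Finsupp.single i 1 ∉ E) → m.degree = e) :
    socle r K (monomialIdeal K E) ≤ component r K (monomialIdeal K E) e := by
  intro a ha
  obtain ⟨f, rfl⟩ := Ideal.Quotient.mk_surjective a
  rw [mk_mem_socle_monomialIdeal] at ha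
  refine ⟨homogeneousComponent e f, homogeneousComponent_mem e f, ?_⟩
  refine Ideal.Quotient.eq.2 (mem_monomialIdeal.2 fun m hm => ?_)
  rw [coeff_sub, coeff_homogeneousComponent]
  split_ifs with hdeg
  · exact sub_self _
  · obtain ⟨i, hi⟩ : ∃ i, m + Finsupp.single i 1 ∈ E := by
      by_contra! hmax
      exact hdeg (hE m hm hmax)
    rw [ha m i hi, sub_zero]

end Socle

section DegreeSlice

variable {σ : Type*} [Finite σ]

/-- The exponents in `E` of total degree `d`: they index the monomial basis of the degree `d`
component of the quotient by `monomialIdeal K E`. -/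
noncomputable def degreeSlice (E : LowerSet (σ →₀ ℕ)) (d : ℕ) : Finset (σ →₀ ℕ) :=
  ((Finsupp.finite_of_degree_eq d).inter_of_right (E : Set (σ →₀ ℕ))).toFinset

@[simp]
theorem mem_degreeSlice {E : LowerSet (σ →₀ ℕ)} {d : ℕ} {m : σ →₀ ℕ} :
    m ∈ degreeSlice E d ↔ m ∈ E ∧ m.degree = d := by
  simp [degreeSlice]

/-- The permutation of the degree `d` standard exponents induced by a permutation `τ` of the
variables. -/
noncomputable def degreeSlicePerm {E : LowerSet (σ →₀ ℕ)} {τ : Equiv.Perm σ}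
    (hτ : ∀ m, m.equivMapDomain τ ∈ E ↔ m ∈ E) (d : ℕ) : Equiv.Perm (degreeSlice E d) :=
  Equiv.Perm.subtypePerm (Finsupp.equivCongrLeft τ) fun m => by
    have hdeg : (m.equivMapDomain τ).degree = m.degree := by
      rw [Finsupp.equivMapDomain_eq_mapDomain, Finsupp.degree_mapDomain]
    simp only [Finsupp.equivCongrLeft_apply, mem_degreeSlice, hτ, hdeg]

end DegreeSlice

section Multiplication

variable {σ R : Type*} [Finite σ] [CommSemiring R] {E : LowerSet (σ →₀ ℕ)} {d : ℕ}

/-- The homogeneous polynomial of degree `d` with prescribed coefficients at the standard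
monomials, and no others. -/
noncomputable def slicePolynomial (v : degreeSlice E d → R) : MvPolynomial σ R :=
  ∑ s : degreeSlice E d, monomial s.1 (v s)

theorem coeff_slicePolynomial (v : degreeSlice E d → R) (s : degreeSlice E d) :
    coeff s.1 (slicePolynomial v) = v s :=
  coeff_sum_monomial Subtype.val_injective v s

theorem isHomogeneous_slicePolynomial (v : degreeSlice E d → R) :
    (slicePolynomial v).IsHomogeneous d :=
  IsHomogeneous.sum _ _ _ fun s _ => isHomogeneous_monomial _ (mem_degreeSlice.1 s.2).2

theorem mem_monomialIdeal_iff_of_isHomogeneous {f : MvPolynomial σ R} (hf : f.IsHomogeneous d) :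
    f ∈ monomialIdeal R E ↔ ∀ s : degreeSlice E d, coeff s.1 f = 0 := by
  refine mem_monomialIdeal.trans ⟨fun h s => h s.1 (mem_degreeSlice.1 s.2).1, fun h m hm => ?_⟩
  by_cases hdeg : m.degree = d
  · exact h ⟨m, mem_degreeSlice.2 ⟨hm, hdeg⟩⟩
  · exact hf.coeff_eq_zero hdeg

/-- The matrix of multiplication by `L` from degree `d` to degree `d + 1` of the quotient by
`monomialIdeal K E`, in the monomial bases. -/
noncomputable def mulMatrix (E : LowerSet (σ →₀ ℕ)) (L : MvPolynomial σ R) (d : ℕ) :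
    Matrix (degreeSlice E (d + 1)) (degreeSlice E d) R :=
  Matrix.of fun t s => coeff t.1 (L * monomial s.1 1)

theorem coeff_mul_slicePolynomial (L : MvPolynomial σ R) (v : degreeSlice E d → R)
    (t : degreeSlice E (d + 1)) :
    coeff t.1 (L * slicePolynomial v) = (mulMatrix E L d).mulVec v t := by
  simp only [slicePolynomial, Finset.mul_sum, coeff_sum, Matrix.mulVec, dotProduct, mulMatrix,
    Matrix.of_apply]
  refine Finset.sum_congr rfl fun s _ => ?_
  rw [← mul_one (v s), ← C_mul_monomial, mul_left_comm, coeff_C_mul, mul_one, mul_comm]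

variable {r : ℕ} {K : Type*} [Field K] {F : LowerSet (Fin r →₀ ℕ)} {L : MvPolynomial (Fin r) K}

theorem mulVec_mulMatrix_injective (hL : L.IsHomogeneous 1)
    (hinj : mulMapInj r K (monomialIdeal K F) L d) :
    Function.Injective (mulMatrix F L d).mulVec := by
  refine (injective_iff_map_eq_zero (mulMatrix F L d).mulVecLin).2 fun v hv => ?_
  have hLv : L * slicePolynomial v ∈ monomialIdeal K F := by
    rw [mem_monomialIdeal_iff_of_isHomogeneous
      (by simpa only [add_comm] using hL.mul (isHomogeneous_slicePolynomial v))]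
    exact fun t => (coeff_mul_slicePolynomial L v t).trans (congrFun hv t)
  have hv_mem : slicePolynomial v ∈ monomialIdeal K F := Ideal.Quotient.eq_zero_iff_mem.1 <|
    hinj _ ⟨_, isHomogeneous_slicePolynomial v, rfl⟩
      (by rwa [← map_mul, Ideal.Quotient.eq_zero_iff_mem])
  ext s
  rw [← coeff_slicePolynomial v s]
  exact (mem_monomialIdeal_iff_of_isHomogeneous (isHomogeneous_slicePolynomial v)).1 hv_mem s

theorem mulVec_mulMatrix_surjective (hsurj : mulMapSurj r K (monomialIdeal K F) L d) :
    Function.Surjective (mulMatrix F L d).mulVec := by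
  intro w
  obtain ⟨_, ⟨f, hf, rfl⟩, hfw⟩ :=
    hsurj _ ⟨slicePolynomial w, isHomogeneous_slicePolynomial w, rfl⟩
  set v : degreeSlice F d → K := fun s => coeff s.1 f
  have hLf : L * f - slicePolynomial w ∈ monomialIdeal K F := Ideal.Quotient.eq.1 hfw
  have hfv : f - slicePolynomial v ∈ monomialIdeal K F := by
    rw [mem_monomialIdeal_iff_of_isHomogeneous
      (IsHomogeneous.sub hf (isHomogeneous_slicePolynomial v))]
    intro s
    rw [coeff_sub, coeff_slicePolynomial, sub_self]
  have hLv : L * slicePolynomial v - slicePolynomial w ∈ monomialIdeal K F := by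
    convert! sub_mem hLf (Ideal.mul_mem_left _ L hfv) using 1
    ring
  refine ⟨v, funext fun t => ?_⟩
  have ht := mem_monomialIdeal.1 hLv t.1 (mem_degreeSlice.1 t.2).1
  rwa [coeff_sub, coeff_mul_slicePolynomial, coeff_slicePolynomial, sub_eq_zero] at ht

theorem not_isLefschetzElem_of_det_eq_zero [DecidableEq (degreeSlice F d)]
    (e : degreeSlice F d ≃ degreeSlice F (d + 1))
    (hdet : ((mulMatrix F L d).submatrix e id).det = 0) :
    ¬ isLefschetzElem r K (monomialIdeal K F) L := by
  rintro ⟨hL, hmax⟩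
  have hmul : ((mulMatrix F L d).submatrix e id).mulVec =
      (Equiv.arrowCongr e.symm (Equiv.refl K)) ∘ (mulMatrix F L d).mulVec := rfl
  have hunit : IsUnit ((mulMatrix F L d).submatrix e id) := by
    rcases hmax d with hinj | hsurj
    · rw [← Matrix.mulVec_injective_iff_isUnit, hmul]
      exact (Equiv.injective _).comp (mulVec_mulMatrix_injective hL hinj)
    · rw [← Matrix.mulVec_surjective_iff_isUnit, hmul]
      exact (Equiv.surjective _).comp (mulVec_mulMatrix_surjective hsurj)
  exact ((Matrix.isUnit_iff_isUnit_det _).1 hunit).ne_zero hdet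

end Multiplication

section Determinant

theorem det_submatrix_eq_zero_of_sign_ne {S T A : Type*} [Fintype S] [DecidableEq S] [Fintype T]
    [DecidableEq T] [CommRing A] [NoZeroDivisors A] [CharZero A] {M : Matrix T S A}
    {π : Equiv.Perm T} {ρ : Equiv.Perm S} (hM : ∀ t s, M (π t) (ρ s) = M t s)
    (hsign : π.sign ≠ ρ.sign) (e : S ≃ T) : (M.submatrix e id).det = 0 := by
  have hinv : ((M.submatrix e id).submatrix (e.symm.permCongr π) id).submatrix id ρ =
      M.submatrix e id := by
    ext s s'
    simp [Equiv.permCongr_apply, hM]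
  have hdet := congrArg Matrix.det hinv
  rw [Matrix.det_permute', Matrix.det_permute, Equiv.Perm.sign_permCongr,
    Int.units_ne_iff_eq_neg.1 hsign, ← mul_assoc] at hdet
  simpa [← Units.val_mul, ← Int.cast_mul, neg_eq_self] using hdet

variable {σ : Type*} [Finite σ] {E : LowerSet (σ →₀ ℕ)} {d : ℕ}

/-- The matrix of divisibility between the standard monomials of degrees `d` and `d + 1`, which is
the matrix of multiplication by the sum of the variables. -/
noncomputable def incidenceMatrix (A : Type*) [Zero A] [One A] (E : LowerSet (σ →₀ ℕ)) (d : ℕ) :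
    Matrix (degreeSlice E (d + 1)) (degreeSlice E d) A :=
  open Classical in Matrix.of fun t s => if s.1 ≤ t.1 then 1 else 0

theorem incidenceMatrix_degreeSlicePerm {A : Type*} [Zero A] [One A] {τ : Equiv.Perm σ}
    (hτ : ∀ m, m.equivMapDomain τ ∈ E ↔ m ∈ E) (t : degreeSlice E (d + 1)) (s : degreeSlice E d) :
    incidenceMatrix A E d (degreeSlicePerm hτ (d + 1) t) (degreeSlicePerm hτ d s) =
      incidenceMatrix A E d t s := by
  have hle : s.1.equivMapDomain τ ≤ t.1.equivMapDomain τ ↔ s.1 ≤ t.1 :=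
    ⟨fun h l => by simpa only [Finsupp.equivMapDomain_apply, τ.symm_apply_apply] using h (τ l),
      fun h l => h (τ.symm l)⟩
  exact if_congr hle rfl rfl

/-- The matrix of multiplication by a linear form whose coefficients are indeterminates: the entry
for `s ≤ t` is the indeterminate `X i` with `t = s + single i 1`. -/
noncomputable def genericMulMatrix (E : LowerSet (σ →₀ ℕ)) (d : ℕ) :
    Matrix (degreeSlice E (d + 1)) (degreeSlice E d) (MvPolynomial σ ℤ) :=
  open Classical in Matrix.of fun t s => if s.1 ≤ t.1 then monomial (t.1 - s.1) 1 else 0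

theorem monomial_mul_genericMulMatrix (t : degreeSlice E (d + 1)) (s : degreeSlice E d) :
    monomial s.1 1 * genericMulMatrix E d t s =
      monomial t.1 1 * incidenceMatrix (MvPolynomial σ ℤ) E d t s := by
  simp only [genericMulMatrix, incidenceMatrix, Matrix.of_apply]
  split_ifs with hst
  · rw [monomial_mul, mul_one, mul_one, add_tsub_cancel_of_le hst]
  · rw [mul_zero, mul_zero]

theorem det_genericMulMatrix_eq_zero [DecidableEq (degreeSlice E d)]
    (e : degreeSlice E d ≃ degreeSlice E (d + 1))
    (hdet : ((incidenceMatrix (MvPolynomial σ ℤ) E d).submatrix e id).det = 0) :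
    ((genericMulMatrix E d).submatrix e id).det = 0 := by
  let x : degreeSlice E d → MvPolynomial σ ℤ := fun s => monomial s.1 1
  let y : degreeSlice E d → MvPolynomial σ ℤ := fun s => monomial (e s).1 1
  have hentries : (Matrix.of fun s s' => x s' * (genericMulMatrix E d).submatrix e id s s') =
      Matrix.of fun s s' => y s * (incidenceMatrix (MvPolynomial σ ℤ) E d).submatrix e id s s' :=
    Matrix.ext fun s s' => monomial_mul_genericMulMatrix (e s) s'
  have hrescale := congrArg Matrix.det hentries
  rw [Matrix.det_mul_row, Matrix.det_mul_column] at hrescale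
  rw [hdet, mul_zero] at hrescale
  refine (mul_eq_zero.1 hrescale).resolve_left (Finset.prod_ne_zero_iff.2 fun s _ => ?_)
  rw [Ne, monomial_eq_zero]
  exact one_ne_zero

theorem mulMatrix_eq_map_genericMulMatrix [Fintype σ] {R : Type*} [CommRing R] (c : σ → R) :
    mulMatrix E (∑ i, c i • X i) d = (genericMulMatrix E d).map (aeval c) := by
  classical
  ext t s
  simp only [mulMatrix, genericMulMatrix, Matrix.of_apply, Matrix.map_apply, coeff_mul_monomial',
    mul_one]
  split_ifs with hst
  · obtain ⟨j, hj⟩ : t.1 - s.1 ∈ Set.range fun i : σ => Finsupp.single i 1 := by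
      rw [Finsupp.range_single_one]
      have hdeg := congrArg Finsupp.degree (tsub_add_cancel_of_le hst)
      rw [map_add, (mem_degreeSlice.1 t.2).2, (mem_degreeSlice.1 s.2).2] at hdeg
      rw [Set.mem_ofPred_eq]
      omega
    rw [← hj]
    change _ = aeval c (X j)
    simp [coeff_sum, coeff_X, Finsupp.single_left_inj]
  · rw [map_zero]

end Determinant

theorem not_hasWLP_monomialIdeal_of_sign_ne {r : ℕ} {K : Type*} [Field K]
    {E : LowerSet (Fin r →₀ ℕ)} {τ : Equiv.Perm (Fin r)}
    (hτ : ∀ m, m.equivMapDomain τ ∈ E ↔ m ∈ E) {d : ℕ}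
    (hcard : (degreeSlice E d).card = (degreeSlice E (d + 1)).card)
    (hsign : (degreeSlicePerm hτ (d + 1)).sign ≠ (degreeSlicePerm hτ d).sign) :
    ¬ hasWLP r K (monomialIdeal K E) := by
  rintro ⟨L, hL⟩
  have hL_span : L ∈ Submodule.span K (Set.range (X : Fin r → MvPolynomial (Fin r) K)) := by
    rw [← homogeneousSubmodule_one_eq_span_X]
    exact hL.1
  obtain ⟨c, rfl⟩ := (Submodule.mem_span_range_iff_exists_fun K).1 hL_span
  let e := Finset.equivOfCardEq hcard
  refine not_isLefschetzElem_of_det_eq_zero e ?_ hL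
  have hgen := det_genericMulMatrix_eq_zero e <|
    det_submatrix_eq_zero_of_sign_ne (incidenceMatrix_degreeSlicePerm hτ) hsign e
  rw [mulMatrix_eq_map_genericMulMatrix, Matrix.submatrix_map, ← AlgHom.mapMatrix_apply,
    ← AlgHom.map_det, hgen, map_zero]

theorem sign_ne_sign_of_card_fixedPoints {S T : Type*} [Fintype S] [DecidableEq S] [Fintype T]
    [DecidableEq T] {π : Equiv.Perm T} {ρ : Equiv.Perm S} (hπ : π ^ 2 = 1) (hρ : ρ ^ 2 = 1)
    (hcard : Fintype.card S = Fintype.card T)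
    (hfix : Fintype.card (Function.fixedPoints ρ) = Fintype.card (Function.fixedPoints π) + 2) :
    π.sign ≠ ρ.sign := by
  have hle : Fintype.card (Function.fixedPoints ρ) ≤ Fintype.card S := Fintype.card_subtype_le _
  have hsucc : (Fintype.card T - Fintype.card (Function.fixedPoints π)) / 2 =
      (Fintype.card S - Fintype.card (Function.fixedPoints ρ)) / 2 + 1 := by
    omega
  rw [Equiv.Perm.sign_of_pow_two_eq_one hπ, Equiv.Perm.sign_of_pow_two_eq_one hρ, hsucc, pow_succ,
    mul_neg_one]
  exact neg_units_ne_self _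

theorem equivMapDomain_swap_eq_self_iff {σ M : Type*} [DecidableEq σ] [Zero M] {i j : σ}
    {m : σ →₀ M} : m.equivMapDomain (Equiv.swap i j) = m ↔ m i = m j := by
  refine ⟨fun h => ?_, fun h => Finsupp.ext fun l => ?_⟩
  · simpa using DFunLike.congr_fun h j
  · rw [Finsupp.equivMapDomain_apply, Equiv.symm_swap, Equiv.swap_apply_def]
    split_ifs with hi hj
    · rw [hi, h]
    · rw [hj, h]
    · rfl

theorem card_fixedPoints_degreeSlicePerm_swap {σ : Type*} [Finite σ] [DecidableEq σ]
    {E : LowerSet (σ →₀ ℕ)} {i j : σ}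
    (hE : ∀ m, m.equivMapDomain (Equiv.swap i j) ∈ E ↔ m ∈ E) (d : ℕ) :
    Fintype.card (Function.fixedPoints (degreeSlicePerm hE d)) =
      ((degreeSlice E d).filter fun m => m i = m j).card := by
  classical
  have hmem : ∀ m : degreeSlice E d, m ∈ Function.fixedPoints (degreeSlicePerm hE d) ↔
      m.1 i = m.1 j := fun m => Subtype.ext_iff.trans equivMapDomain_swap_eq_self_iff
  rw [← Fintype.card_coe]
  exact Fintype.card_congr <| (Equiv.subtypeEquivRight hmem).trans <|
    (Equiv.subtypeSubtypeEquivSubtypeInter _ fun m : σ →₀ ℕ => m i = m j).trans <|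
      Equiv.subtypeEquivRight fun m => by rw [Finset.mem_filter]

theorem not_hasWLP_monomialIdeal_of_swap {r : ℕ} {K : Type*} [Field K]
    {E : LowerSet (Fin r →₀ ℕ)} {i j : Fin r}
    (hE : ∀ m, m.equivMapDomain (Equiv.swap i j) ∈ E ↔ m ∈ E) {d : ℕ}
    (hcard : (degreeSlice E d).card = (degreeSlice E (d + 1)).card)
    (hfix : ((degreeSlice E d).filter fun m => m i = m j).card =
      ((degreeSlice E (d + 1)).filter fun m => m i = m j).card + 2) :
    ¬ hasWLP r K (monomialIdeal K E) := by
  have hsq : ∀ d, degreeSlicePerm hE d ^ 2 = 1 := fun d => by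
    refine Equiv.ext fun m => Subtype.ext <| Finsupp.ext fun l => ?_
    change m.1 ((Equiv.swap i j).symm ((Equiv.swap i j).symm l)) = m.1 l
    rw [Equiv.symm_swap, Equiv.swap_apply_self]
  refine not_hasWLP_monomialIdeal_of_sign_ne hE hcard <|
    sign_ne_sign_of_card_fixedPoints (hsq _) (hsq _) ?_ ?_
  · simpa only [Fintype.card_coe] using hcard
  · simpa only [card_fixedPoints_degreeSlicePerm_swap] using hfix

/-- The Euler characteristic of the four-term exact sequence of the multiplication by `X i` from
the span of the monomials in `A` to the span of those in `B`. -/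
theorem card_add_card_filter_apply_eq_zero {σ : Type*} [DecidableEq σ] {i : σ}
    {A B : Finset (σ →₀ ℕ)} (hAB : ∀ m, m + Finsupp.single i 1 ∈ B → m ∈ A) :
    A.card + (B.filter fun t => t i = 0).card =
      B.card + (A.filter fun s => s + Finsupp.single i 1 ∉ B).card := by
  have himage : (A.filter fun s => s + Finsupp.single i 1 ∈ B).image (· + Finsupp.single i 1) =
      B.filter fun t => ¬ t i = 0 := by
    ext t
    simp only [Finset.mem_image, Finset.mem_filter]
    constructor
    · rintro ⟨s, ⟨-, hs⟩, rfl⟩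
      exact ⟨hs, by simp⟩
    · rintro ⟨ht, hti⟩
      have hsub : t - Finsupp.single i 1 + Finsupp.single i 1 = t :=
        tsub_add_cancel_of_le (Finsupp.single_le_iff.2 (Nat.one_le_iff_ne_zero.2 hti))
      exact ⟨t - Finsupp.single i 1, ⟨hAB _ (by rwa [hsub]), by rwa [hsub]⟩, hsub⟩
  have hcard := congrArg Finset.card himage
  rw [Finset.card_image_of_injective _ (add_left_injective _)] at hcard
  have hA := Finset.card_filter_add_card_filter_not (s := A) fun s => s + Finsupp.single i 1 ∈ B
  have hB := Finset.card_filter_add_card_filter_not (s := B) fun t => t i = 0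
  omega

section NotchedBox

variable {σ : Type*} {α k : ℕ} {m : σ →₀ ℕ}

/-- The exponents of the monomials divisible neither by a `k`-th power of a variable nor by the
`α`-th power of the product of all variables: a box with a corner cut off. -/
def notchedBox (σ : Type*) (α k : ℕ) : LowerSet (σ →₀ ℕ) where
  carrier := {m | (∀ i, m i < k) ∧ ∃ i, m i < α}
  lower' _ _ hle := fun ⟨hk, i, hi⟩ => ⟨fun j => (hle j).trans_lt (hk j), i, (hle i).trans_lt hi⟩

theorem mem_notchedBox : m ∈ notchedBox σ α k ↔ (∀ i, m i < k) ∧ ∃ i, m i < α :=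
  Iff.rfl

theorem equivMapDomain_mem_notchedBox (τ : Equiv.Perm σ) (m : σ →₀ ℕ) :
    m.equivMapDomain τ ∈ notchedBox σ α k ↔ m ∈ notchedBox σ α k :=
  and_congr (τ.symm.surjective.forall (p := fun i => m i < k)).symm
    (τ.symm.surjective.exists (p := fun i => m i < α)).symm

theorem finite_notchedBox [Finite σ] : (notchedBox σ α k : Set (σ →₀ ℕ)).Finite := by
  classical
  have := Fintype.ofFinite σ
  refine (Set.finite_Iic (∑ i : σ, Finsupp.single i k)).subset fun m hm i => ?_
  simpa [Finsupp.single_apply] using (hm.1 i).le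

variable [Fintype σ]

theorem span_pow_eq_monomialIdeal_notchedBox (R : Type*) [CommSemiring R] :
    Ideal.span (insert (∏ i : σ, X i ^ α) (Set.range fun i : σ => (X i : MvPolynomial σ R) ^ k)) =
      monomialIdeal R (notchedBox σ α k) := by
  have hgens : insert (∏ i : σ, X i ^ α) (Set.range fun i : σ => (X i : MvPolynomial σ R) ^ k) =
      (fun s => monomial s 1) ''
        insert (∑ i, Finsupp.single i α) (Set.range fun i => Finsupp.single i k) := by
    simp only [Set.image_insert_eq, ← Set.range_comp, Function.comp_def, monomial_sum_one,
      X_pow_eq_monomial]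
  rw [hgens, span_monomial_image_eq_monomialIdeal]
  refine congrArg (monomialIdeal R) (SetLike.ext fun m => ?_)
  have hprod : ∑ i, Finsupp.single i α ≤ m ↔ ∀ i, α ≤ m i := by
    simp only [Finsupp.le_def, Finsupp.coe_finsetSum, Finset.sum_apply,
      Finsupp.univ_sum_single_apply']
  simp only [UpperSet.mem_compl_iff, mem_upperClosure, Set.exists_mem_insert, hprod,
    Set.exists_range_iff, Finsupp.single_le_iff, mem_notchedBox, not_or, not_forall, not_exists,
    not_le]
  exact and_comm

/-- A maximal exponent has one coordinate `α - 1` and all others `k - 1`. -/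
theorem degree_eq_of_mem_notchedBox_of_maximal (hαk : α ≤ k) (hm : m ∈ notchedBox σ α k)
    (hmax : ∀ i, m + Finsupp.single i 1 ∉ notchedBox σ α k) :
    m.degree = (α - 1) + (Fintype.card σ - 1) * (k - 1) := by
  classical
  obtain ⟨hmk, i, hi⟩ := hm
  have hlt : ∀ j, m j + 1 < k → ∀ l, (m + Finsupp.single j 1 : σ →₀ ℕ) l < k := by
    intro j hj l
    rw [Finsupp.add_apply, Finsupp.single_apply]
    split_ifs with hjl
    · exact hjl ▸ hj
    · exact hmk l
  have hother : ∀ j ∈ Finset.univ.erase i, m j = k - 1 := by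
    intro j hj
    by_contra hjk
    have := hmk j
    exact hmax j ⟨hlt j (by omega), i, by simpa [Finset.ne_of_mem_erase hj] using hi⟩
  have hi_eq : m i = α - 1 := by
    by_contra hiα
    refine hmax i ⟨hlt i (by omega), i, ?_⟩
    rw [Finsupp.add_apply, Finsupp.single_eq_same]
    omega
  rw [Finsupp.degree_eq_sum, ← Finset.add_sum_erase _ _ (Finset.mem_univ i), hi_eq,
    Finset.sum_congr rfl hother, Finset.sum_const, Finset.card_erase_of_mem (Finset.mem_univ i),
    Finset.card_univ, smul_eq_mul]

end NotchedBox

section ThreeVariables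

variable {α k d : ℕ} {m : Fin 3 →₀ ℕ}

/-- The exponent of the monomial `x ^ a * y ^ b * z ^ c`. -/
noncomputable def exponent (a b c : ℕ) : Fin 3 →₀ ℕ :=
  Finsupp.equivFunOnFinite.symm ![a, b, c]

theorem exponent_apply_zero (a b c : ℕ) : exponent a b c 0 = a := rfl

theorem exponent_apply_one (a b c : ℕ) : exponent a b c 1 = b := rfl

theorem exponent_apply_two (a b c : ℕ) : exponent a b c 2 = c := rfl

theorem eq_exponent_iff {a b c : ℕ} : m = exponent a b c ↔ m 0 = a ∧ m 1 = b ∧ m 2 = c := by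
  simp [Finsupp.ext_iff, Fin.forall_fin_succ, exponent_apply_zero, exponent_apply_one,
    exponent_apply_two]

theorem add_single_two_eq_exponent (m : Fin 3 →₀ ℕ) :
    m + Finsupp.single 2 1 = exponent (m 0) (m 1) (m 2 + 1) := by
  simp [eq_exponent_iff]

theorem mem_degreeSlice_notchedBox : m ∈ degreeSlice (notchedBox (Fin 3) α k) d ↔
    ((m 0 < k ∧ m 1 < k ∧ m 2 < k) ∧ (m 0 < α ∨ m 1 < α ∨ m 2 < α)) ∧ m 0 + m 1 + m 2 = d := by
  simp only [mem_degreeSlice, mem_notchedBox, Finsupp.degree_eq_sum, Fin.sum_univ_three,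
    Fin.forall_fin_succ, Fin.exists_fin_succ, IsEmpty.forall_iff, IsEmpty.exists_iff,
    and_true, or_false, Fin.succ_zero_eq_one, Fin.succ_one_eq_two]

theorem add_single_two_mem_degreeSlice_notchedBox :
    m + Finsupp.single 2 1 ∈ degreeSlice (notchedBox (Fin 3) α k) d ↔
      ((m 0 < k ∧ m 1 < k ∧ m 2 + 1 < k) ∧ (m 0 < α ∨ m 1 < α ∨ m 2 + 1 < α)) ∧
        m 0 + m 1 + (m 2 + 1) = d := by
  rw [add_single_two_eq_exponent, mem_degreeSlice_notchedBox]
  rfl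

/-- These exponents span the kernel of the multiplication by `z` on the degree `d` component. -/
theorem mem_degreeSlice_and_add_single_two_notMem_iff (hαk : 2 * α ≤ k) (hd : d + 2 = α + k) :
    m ∈ degreeSlice (notchedBox (Fin 3) α k) d ∧
        m + Finsupp.single 2 1 ∉ degreeSlice (notchedBox (Fin 3) α k) (d + 1) ↔
      (m 0 + m 1 + 1 = α ∧ m 2 + 1 = k) ∨
        (α ≤ m 0 ∧ α ≤ m 1 ∧ m 0 + m 1 + 1 = k ∧ m 2 + 1 = α) := by
  rw [mem_degreeSlice_notchedBox, add_single_two_mem_degreeSlice_notchedBox]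
  omega

theorem card_degreeSlice_filter_add_single_two_notMem (hα : 0 < α) (hαk : 2 * α ≤ k)
    (hd : d + 2 = α + k) :
    ((degreeSlice (notchedBox (Fin 3) α k) d).filter fun s =>
      s + Finsupp.single 2 1 ∉ degreeSlice (notchedBox (Fin 3) α k) (d + 1)).card = k - α := by
  have himage : (degreeSlice (notchedBox (Fin 3) α k) d).filter (fun s =>
      s + Finsupp.single 2 1 ∉ degreeSlice (notchedBox (Fin 3) α k) (d + 1)) =
      (Finset.range (k - α)).image fun a =>
        if a < α then exponent a (α - 1 - a) (k - 1) else exponent a (k - 1 - a) (α - 1) := by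
    ext s
    simp only [Finset.mem_filter, mem_degreeSlice_and_add_single_two_notMem_iff hαk hd,
      Finset.mem_image, Finset.mem_range, eq_comm (b := s)]
    constructor
    · intro hs
      refine ⟨s 0, by omega, ?_⟩
      split_ifs <;> rw [eq_exponent_iff] <;> omega
    · rintro ⟨a, ha, hs⟩
      split_ifs at hs <;> rw [eq_exponent_iff] at hs <;> omega
  rw [himage, Finset.card_image_of_injective, Finset.card_range]
  refine Function.LeftInverse.injective (g := fun s => s 0) fun a => ?_
  beta_reduce
  split_ifs <;> rfl

theorem card_degreeSlice_filter_apply_two_eq_zero (hα : 0 < α) (hd : d + 1 = α + k) :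
    ((degreeSlice (notchedBox (Fin 3) α k) d).filter fun t => t 2 = 0).card = k - α := by
  have himage : (degreeSlice (notchedBox (Fin 3) α k) d).filter (fun t => t 2 = 0) =
      (Finset.Ico α k).image fun a => exponent a (d - a) 0 := by
    ext t
    simp only [Finset.mem_filter, Finset.mem_image, Finset.mem_Ico, mem_degreeSlice_notchedBox,
      eq_comm (b := t), eq_exponent_iff]
    constructor
    · intro ht
      exact ⟨t 0, by omega, rfl, by omega, ht.2⟩
    · rintro ⟨a, ha, h⟩
      omega
  rw [himage, Finset.card_image_of_injective _ fun a b h => DFunLike.congr_fun h 0, Nat.card_Ico]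

/-- Multiplication by `z` has kernel and cokernel of the same dimension `k - α`. -/
theorem card_degreeSlice_notchedBox_eq (hα : 0 < α) (hαk : 2 * α ≤ k) (hd : d + 2 = α + k) :
    (degreeSlice (notchedBox (Fin 3) α k) d).card =
      (degreeSlice (notchedBox (Fin 3) α k) (d + 1)).card := by
  have hcard := card_add_card_filter_apply_eq_zero (i := 2)
    (A := degreeSlice (notchedBox (Fin 3) α k) d)
    (B := degreeSlice (notchedBox (Fin 3) α k) (d + 1)) fun m hm => by
      rw [add_single_two_mem_degreeSlice_notchedBox] at hm
      rw [mem_degreeSlice_notchedBox]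
      omega
  rw [card_degreeSlice_filter_add_single_two_notMem hα hαk hd,
    card_degreeSlice_filter_apply_two_eq_zero hα (by omega)] at hcard
  exact Nat.add_right_cancel hcard

/-- Restricted to the monomials with equal exponents of `x` and `y`, multiplication by `z` is
surjective with kernel spanned by `(x * y) ^ a * z ^ (2 * b)` and `(x * y) ^ b * z ^ (2 * a)`. -/
theorem card_degreeSlice_filter_apply_zero_eq_apply_one {a b : ℕ} (hab : 2 * a + 1 ≤ b) :
    ((degreeSlice (notchedBox (Fin 3) (2 * a + 1) (2 * b + 1)) (2 * a + 2 * b)).filter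
        fun m => m 0 = m 1).card =
      ((degreeSlice (notchedBox (Fin 3) (2 * a + 1) (2 * b + 1)) (2 * a + 2 * b + 1)).filter
        fun m => m 0 = m 1).card + 2 := by
  set A := degreeSlice (notchedBox (Fin 3) (2 * a + 1) (2 * b + 1)) (2 * a + 2 * b)
  set B := degreeSlice (notchedBox (Fin 3) (2 * a + 1) (2 * b + 1)) (2 * a + 2 * b + 1)
  have hdiag : ∀ m : Fin 3 →₀ ℕ, m + Finsupp.single 2 1 ∈ B.filter (fun t => t 0 = t 1) ↔
      m + Finsupp.single 2 1 ∈ B ∧ m 0 = m 1 := fun m => by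
    simp [add_single_two_eq_exponent, exponent_apply_zero, exponent_apply_one]
  have hcoker : (B.filter fun t => t 0 = t 1).filter (fun t => t 2 = 0) = ∅ := by
    refine Finset.filter_eq_empty_iff.2 fun t ht => ?_
    rw [Finset.mem_filter, mem_degreeSlice_notchedBox] at ht
    omega
  have hker : (A.filter fun s => s 0 = s 1).filter
      (fun s => s + Finsupp.single 2 1 ∉ B.filter fun t => t 0 = t 1) =
        {exponent a a (2 * b), exponent b b (2 * a)} := by
    ext s
    have hand : (s ∈ A ∧ s 0 = s 1) ∧ ¬ (s + Finsupp.single 2 1 ∈ B ∧ s 0 = s 1) ↔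
        (s ∈ A ∧ s + Finsupp.single 2 1 ∉ B) ∧ s 0 = s 1 := by tauto
    rw [Finset.mem_filter, Finset.mem_filter, hdiag, hand,
      mem_degreeSlice_and_add_single_two_notMem_iff (by omega) (by omega), Finset.mem_insert,
      Finset.mem_singleton, eq_exponent_iff, eq_exponent_iff]
    omega
  have hne : exponent a a (2 * b) ≠ exponent b b (2 * a) := by
    intro h
    have : a = b := DFunLike.congr_fun h 0
    omega
  have hcard := card_add_card_filter_apply_eq_zero (i := 2) (A := A.filter fun s => s 0 = s 1)
    (B := B.filter fun t => t 0 = t 1) fun m hm => by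
      rw [hdiag, add_single_two_mem_degreeSlice_notchedBox] at hm
      rw [Finset.mem_filter, mem_degreeSlice_notchedBox]
      omega
  rwa [hcoker, hker, Finset.card_empty, Finset.card_pair hne] at hcard

theorem not_hasWLP_monomialIdeal_notchedBox {K : Type*} [Field K] (hα : Odd α) (hk : Odd k)
    (hαk : 2 * α + 1 ≤ k) : ¬ hasWLP 3 K (monomialIdeal K (notchedBox (Fin 3) α k)) := by
  obtain ⟨a, rfl⟩ := hα
  obtain ⟨b, rfl⟩ := hk
  exact not_hasWLP_monomialIdeal_of_swap (equivMapDomain_mem_notchedBox (Equiv.swap 0 1))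
    (card_degreeSlice_notchedBox_eq (by omega) (by omega) (by omega))
    (card_degreeSlice_filter_apply_zero_eq_apply_one (by omega))

end ThreeVariables

/-- For `α` odd, `k` odd with `k ≥ 2α + 1`, the algebra
`K[x,y,z]/(x^k, y^k, z^k, x^α y^α z^α)` is Artinian and level, and it fails the WLP. -/
theorem stmt_19 {K : Type*} [Field K] (α k : ℕ) (hα : Odd α) (hk : Odd k)
    (hkα : 2 * α + 1 ≤ k) :
    letI I : Ideal (MvPolynomial (Fin 3) K) :=
      Ideal.span {X 0 ^ k, X 1 ^ k, X 2 ^ k, X 0 ^ α * X 1 ^ α * X 2 ^ α}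
    FiniteDimensional K (MvPolynomial (Fin 3) K ⧸ I) ∧
    (∃ e : ℕ, socle 3 K I ≠ ⊥ ∧ socle 3 K I ≤ component 3 K I e) ∧
    ¬ hasWLP 3 K I := by
  have hgens : ({X 0 ^ k, X 1 ^ k, X 2 ^ k, X 0 ^ α * X 1 ^ α * X 2 ^ α} :
      Set (MvPolynomial (Fin 3) K)) =
        insert (∏ i, X i ^ α) (Set.range fun i => X i ^ k) := by
    ext f
    simp only [Fin.prod_univ_three, Set.mem_insert_iff, Set.mem_singleton_iff, Set.mem_range,
      Fin.exists_fin_succ, IsEmpty.exists_iff, Fin.succ_zero_eq_one, Fin.succ_one_eq_two,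
      eq_comm (a := f)]
    tauto
  rw [hgens, span_pow_eq_monomialIdeal_notchedBox]
  exact ⟨finite_quotient_monomialIdeal finite_notchedBox,
    ⟨_, socle_monomialIdeal_ne_bot finite_notchedBox ⟨0, fun _ => hk.pos, 0, hα.pos⟩,
      socle_monomialIdeal_le_component fun _ hm =>
        degree_eq_of_mem_notchedBox_of_maximal (by omega) hm⟩,
    not_hasWLP_monomialIdeal_notchedBox hα hk hkα⟩
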